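/- Let (Ω, 𝒜, μ) be a σ-finite measure space, T a positive Dunford–Schwartz operator, and 1 ≤ p < ∞. Then for every f ∈ L^p(μ) the Cesàro averages A_n(f) = (1/n) ∑_{k=0}^{n−1} T^k f converge almost uniformly to some function f̂ ∈ L^p(μ). -/

import Mathlib

open MeasureTheory Filter Set ENNReal Topology

variable {Ω : Type*} [MeasurableSpace Ω]

/-- `f` belongs to `L¹(μ) + L^∞(μ)`. -/
def MemL1pLinf (μ : Measure Ω) (f : Ω →ₘ[μ] ℝ) : Prop :=
  ∃ g h : Ω →ₘ[μ] ℝ, eLpNorm g 1 μ ≠ ∞ ∧ eLpNorm h ⊤ μ ≠ ∞ ∧ f = g + h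

/-- A positive Dunford–Schwartz operator: linear and positive on `L¹+L^∞`,
contracting both the `L¹`- and `L^∞`-norms. -/
structure IsPosDS (μ : Measure Ω) (T : (Ω →ₘ[μ] ℝ) → (Ω →ₘ[μ] ℝ)) : Prop where
  map_add : ∀ f g, MemL1pLinf μ f → MemL1pLinf μ g → T (f + g) = T f + T g
  map_smul : ∀ (c : ℝ) (f), MemL1pLinf μ f → T (c • f) = c • T f
  map_pos : ∀ f, MemL1pLinf μ f → 0 ≤ f → 0 ≤ T f
  norm_one : ∀ f, MemL1pLinf μ f → eLpNorm (T f) 1 μ ≤ eLpNorm f 1 μ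
  norm_top : ∀ f, MemL1pLinf μ f → eLpNorm (T f) ⊤ μ ≤ eLpNorm f ⊤ μ

/-- The Cesàro averages `A_n(f) = (1/n) ∑_{k<n} T^k f`. -/
noncomputable def cesaro (μ : Measure Ω) (T : (Ω →ₘ[μ] ℝ) → (Ω →ₘ[μ] ℝ)) (n : ℕ)
    (f : Ω →ₘ[μ] ℝ) : Ω →ₘ[μ] ℝ :=
  (n : ℝ)⁻¹ • ∑ k ∈ Finset.range n, T^[k] f

/-- Almost uniform convergence of a net `F` to `f`. -/
def AuTendsto {ι : Type*} (μ : Measure Ω) (l : Filter ι) (F : ι → Ω →ₘ[μ] ℝ)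
    (f : Ω →ₘ[μ] ℝ) : Prop :=
  ∀ ε : ℝ, 0 < ε → ∃ E : Set Ω, MeasurableSet E ∧ μ Eᶜ ≤ ENNReal.ofReal ε ∧
    Tendsto (fun i => eLpNorm (E.indicator (⇑(F i - f))) ⊤ μ) l (𝓝 0)

/-- `R_μ`: elements of `L¹+L^∞` whose distribution tails are finite. -/
def MemRmu (μ : Measure Ω) (f : Ω →ₘ[μ] ℝ) : Prop :=
  MemL1pLinf μ f ∧ ∀ lam : ℝ, 0 < lam → μ {ω | lam < |f ω|} < ∞

/-!
The functions with almost uniformly convergent averages form a closed subset of `L¹ + L^∞`: an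
`L^∞`-perturbation of size `η` moves every average by at most `η`, and Hopf's maximal inequality
`λ μ{sup_n |A_n a| > λ} ≤ ‖a‖₁`, proved by Garsia's argument, controls an `L¹`-perturbation.

A function `s ∈ L² ∩ L^∞` is approximated by `P s - (A_n s - s)`, where `P` is the projection of
`L²` onto the fixed points of `T`: by the mean ergodic theorem the error `A_n s - P s` is small in
`L²`, hence in `L¹ + L^∞`, while `A_n s - s` is a coboundary `T w - w` with `w` bounded, so that its
averages tend to `0` uniformly. Such functions `s` approximate every element of `R_μ ⊇ L^p`.

`T` contracts every `L^p`-norm, because `|T f| ^ r ≤ T (|f| ^ r)` by Jensen's inequality for the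
positive sub-Markovian operator `T`. Hence `T` acts on `L²`, and by Fatou's lemma the limit of the
averages of `f ∈ L^p` is in `L^p`.
-/

section AEEqFun

variable {μ : Measure Ω}

instance aeEqFun_isOrderedAddMonoid {γ : Type*} [TopologicalSpace γ] [AddCommMonoid γ]
    [ContinuousAdd γ] [PartialOrder γ] [IsOrderedAddMonoid γ] :
    IsOrderedAddMonoid (Ω →ₘ[μ] γ) where
  add_le_add_left f g hfg h := by
    rw [← AEEqFun.coeFn_le] at hfg ⊢
    filter_upwards [hfg, AEEqFun.coeFn_add f h, AEEqFun.coeFn_add g h] with x hx hf hg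
    simpa only [hf, hg, Pi.add_apply] using add_le_add_left hx (h x)

instance aeEqFun_posSMulMono {𝕜 γ : Type*} [Zero 𝕜] [Preorder 𝕜] [TopologicalSpace γ]
    [Preorder γ] [SMul 𝕜 γ] [ContinuousConstSMul 𝕜 γ] [PosSMulMono 𝕜 γ] :
    PosSMulMono 𝕜 (Ω →ₘ[μ] γ) where
  smul_le_smul_of_nonneg_left c hc f g hfg := by
    rw [← AEEqFun.coeFn_le] at hfg ⊢
    filter_upwards [hfg, AEEqFun.coeFn_smul c f, AEEqFun.coeFn_smul c g] with x hx hf hg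
    simpa only [hf, hg, Pi.smul_apply] using smul_le_smul_of_nonneg_left hx hc

instance aeEqFun_zeroLEOneClass {γ : Type*} [TopologicalSpace γ] [Zero γ] [One γ] [Preorder γ]
    [ZeroLEOneClass γ] : ZeroLEOneClass (Ω →ₘ[μ] γ) where
  zero_le_one := by
    rw [← AEEqFun.coeFn_le]
    filter_upwards [AEEqFun.coeFn_zero (μ := μ) (β := γ), AEEqFun.coeFn_one (μ := μ) (β := γ)]
      with x h₀ h₁
    simpa only [h₀, h₁, Pi.zero_apply, Pi.one_apply] using zero_le_one

variable {E : Type*} [NormedAddCommGroup E] {p : ℝ≥0∞}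

theorem eLpNorm_coeFn_sum_le {ι : Type*} (hp : 1 ≤ p) (s : Finset ι) (f : ι → Ω →ₘ[μ] E) :
    eLpNorm ⇑(∑ i ∈ s, f i) p μ ≤ ∑ i ∈ s, eLpNorm (f i) p μ := by
  rw [eLpNorm_congr_ae (AEEqFun.coeFn_finsetSum s f)]
  exact eLpNorm_sum_le (fun i _ => (f i).aestronglyMeasurable) hp

theorem eLpNorm_coeFn_smul [NormedSpace ℝ E] (c : ℝ) (f : Ω →ₘ[μ] E) :
    eLpNorm ⇑(c • f) p μ = ‖c‖ₑ * eLpNorm f p μ := by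
  rw [eLpNorm_congr_ae (AEEqFun.coeFn_smul c f), eLpNorm_const_smul]

theorem eLpNorm_coeFn_zero : eLpNorm ⇑(0 : Ω →ₘ[μ] E) p μ = 0 := by
  rw [eLpNorm_congr_ae AEEqFun.coeFn_zero, eLpNorm_zero]

theorem eLpNorm_coeFn_mono_abs {f g : Ω →ₘ[μ] ℝ} (h : |f| ≤ |g|) :
    eLpNorm f p μ ≤ eLpNorm g p μ := by
  refine eLpNorm_mono_ae ?_
  filter_upwards [AEEqFun.coeFn_le.2 h, AEEqFun.coeFn_abs f, AEEqFun.coeFn_abs g] with x hx hf hg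
  rwa [hf, hg] at hx

end AEEqFun

section L1pLinf

variable {μ : Measure Ω} {f g : Ω →ₘ[μ] ℝ}

variable (μ) in
/-- The space `L¹(μ) + L^∞(μ)` as a subspace of the space of all a.e.-classes. -/
def L1pLinf : Submodule ℝ (Ω →ₘ[μ] ℝ) :=
  Lp.LpSubmodule ℝ ℝ 1 μ ⊔ Lp.LpSubmodule ℝ ℝ ⊤ μ

theorem mem_L1pLinf_iff : f ∈ L1pLinf μ ↔ MemL1pLinf μ f := by
  simp only [L1pLinf, Submodule.mem_sup, MemL1pLinf, Lp.LpSubmodule, Submodule.mem_mk,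
    AddSubgroup.mem_toAddSubmonoid, Lp.mem_Lp_iff_eLpNorm_lt_top, lt_top_iff_ne_top]
  exact ⟨fun ⟨g, hg, h, hh, hf⟩ => ⟨g, h, hg, hh, hf.symm⟩,
    fun ⟨g, h, hg, hh, hf⟩ => ⟨g, hg, h, hh, hf.symm⟩⟩

theorem memL1pLinf_of_eLpNorm_one_ne_top (hf : eLpNorm f 1 μ ≠ ∞) : MemL1pLinf μ f :=
  ⟨f, 0, hf, eLpNorm_coeFn_zero.trans_ne zero_ne_top, (add_zero f).symm⟩

theorem memL1pLinf_of_eLpNorm_top_ne_top (hf : eLpNorm f ⊤ μ ≠ ∞) : MemL1pLinf μ f :=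
  ⟨0, f, eLpNorm_coeFn_zero.trans_ne zero_ne_top, hf, (zero_add f).symm⟩

namespace MemL1pLinf

theorem add (hf : MemL1pLinf μ f) (hg : MemL1pLinf μ g) : MemL1pLinf μ (f + g) :=
  mem_L1pLinf_iff.1 <| add_mem (mem_L1pLinf_iff.2 hf) (mem_L1pLinf_iff.2 hg)

theorem sub (hf : MemL1pLinf μ f) (hg : MemL1pLinf μ g) : MemL1pLinf μ (f - g) :=
  mem_L1pLinf_iff.1 <| sub_mem (mem_L1pLinf_iff.2 hf) (mem_L1pLinf_iff.2 hg)

theorem smul (c : ℝ) (hf : MemL1pLinf μ f) : MemL1pLinf μ (c • f) :=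
  mem_L1pLinf_iff.1 <| Submodule.smul_mem _ c (mem_L1pLinf_iff.2 hf)

theorem sum {ι : Type*} {s : Finset ι} {f : ι → Ω →ₘ[μ] ℝ} (hf : ∀ i ∈ s, MemL1pLinf μ (f i)) :
    MemL1pLinf μ (∑ i ∈ s, f i) :=
  mem_L1pLinf_iff.1 <| sum_mem fun i hi => mem_L1pLinf_iff.2 (hf i hi)

theorem abs (hf : MemL1pLinf μ f) : MemL1pLinf μ |f| := by
  obtain ⟨a, b, ha, hb, rfl⟩ := hf
  refine ⟨|a + b| - |b|, |b|, ne_top_of_le_ne_top ha (eLpNorm_coeFn_mono_abs ?_),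
    ne_top_of_le_ne_top hb (eLpNorm_coeFn_mono_abs (abs_abs b).le), (sub_add_cancel _ _).symm⟩
  simpa only [add_sub_cancel_right] using abs_abs_sub_abs_le (a + b) b

theorem one : MemL1pLinf μ 1 :=
  memL1pLinf_of_eLpNorm_top_ne_top (by
    rw [eLpNorm_congr_ae AEEqFun.coeFn_one]
    exact (memLp_top_const (1 : ℝ)).2.ne)

end MemL1pLinf

end L1pLinf

theorem eLpNorm_cesaro_le {μ : Measure Ω} {T : (Ω →ₘ[μ] ℝ) → (Ω →ₘ[μ] ℝ)}
    {f : Ω →ₘ[μ] ℝ} {p : ℝ≥0∞} (hp : 1 ≤ p)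
    (h : ∀ n, eLpNorm (T^[n] f) p μ ≤ eLpNorm f p μ) (n : ℕ) :
    eLpNorm (cesaro μ T n f) p μ ≤ eLpNorm f p μ := by
  rcases eq_or_ne n 0 with rfl | hn
  · simp only [cesaro, Finset.range_zero, Finset.sum_empty, smul_zero, eLpNorm_coeFn_zero, zero_le]
  have hsum : eLpNorm ⇑(∑ k ∈ Finset.range n, T^[k] f) p μ ≤ n * eLpNorm f p μ := by
    simpa using (eLpNorm_coeFn_sum_le hp (Finset.range n) fun k => T^[k] f).trans
      (Finset.sum_le_sum fun k _ => h k)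
  calc eLpNorm (cesaro μ T n f) p μ
      = (n : ℝ≥0∞)⁻¹ * eLpNorm ⇑(∑ k ∈ Finset.range n, T^[k] f) p μ := by
        rw [cesaro, eLpNorm_coeFn_smul, enorm_inv (by positivity), Real.enorm_natCast]
    _ ≤ (n : ℝ≥0∞)⁻¹ * (n * eLpNorm f p μ) := by gcongr
    _ = eLpNorm f p μ := ENNReal.inv_mul_cancel_left (by simpa) (by simp)

namespace IsPosDS

variable {μ : Measure Ω} {T S : (Ω →ₘ[μ] ℝ) → (Ω →ₘ[μ] ℝ)} {f g : Ω →ₘ[μ] ℝ}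

theorem map_mem (hT : IsPosDS μ T) (hf : MemL1pLinf μ f) : MemL1pLinf μ (T f) := by
  obtain ⟨a, b, ha, hb, rfl⟩ := hf
  have ha' := memL1pLinf_of_eLpNorm_one_ne_top ha
  have hb' := memL1pLinf_of_eLpNorm_top_ne_top hb
  exact ⟨T a, T b, ne_top_of_le_ne_top ha (hT.norm_one a ha'),
    ne_top_of_le_ne_top hb (hT.norm_top b hb'), hT.map_add a b ha' hb'⟩

theorem map_sub (hT : IsPosDS μ T) (hf : MemL1pLinf μ f) (hg : MemL1pLinf μ g) :
    T (f - g) = T f - T g :=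
  eq_sub_of_add_eq (by rw [← hT.map_add _ _ (hf.sub hg) hg, sub_add_cancel])

theorem map_zero (hT : IsPosDS μ T) : T 0 = 0 := by
  simpa only [sub_self] using hT.map_sub MemL1pLinf.one MemL1pLinf.one

theorem map_mono (hT : IsPosDS μ T) (hf : MemL1pLinf μ f) (hg : MemL1pLinf μ g) (hfg : f ≤ g) :
    T f ≤ T g :=
  sub_nonneg.1 <| hT.map_sub hg hf ▸ hT.map_pos _ (hg.sub hf) (sub_nonneg.2 hfg)

theorem abs_map_le (hT : IsPosDS μ T) (hf : MemL1pLinf μ f) : |T f| ≤ T |f| := by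
  refine abs_le'.2 ⟨hT.map_mono hf hf.abs (le_abs_self f), neg_le_iff_add_nonneg.2 ?_⟩
  rw [← hT.map_add _ _ hf.abs hf]
  exact hT.map_pos _ (hf.abs.add hf) (neg_le_iff_add_nonneg.1 (neg_le_abs f))

theorem map_one_le (hT : IsPosDS μ T) : T 1 ≤ 1 := by
  have hnorm : eLpNormEssSup (T 1) μ ≤ ‖(1 : ℝ)‖ₑ := (hT.norm_top 1 .one).trans <| by
    rw [eLpNorm_congr_ae AEEqFun.coeFn_one]
    exact eLpNormEssSup_le_of_ae_enorm_bound (ae_of_all _ fun _ => le_rfl)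
  rw [← AEEqFun.coeFn_le]
  filter_upwards [ae_le_eLpNormEssSup (f := T 1) (μ := μ),
    AEEqFun.coeFn_one (μ := μ) (β := ℝ)] with x hx hone
  rw [hone, Pi.one_apply, ← abs_one (α := ℝ)]
  exact (le_abs_self _).trans (enorm_le_iff_norm_le.1 (hx.trans hnorm))

protected theorem id : IsPosDS μ id :=
  ⟨fun _ _ _ _ => rfl, fun _ _ _ => rfl, fun _ _ h => h, fun _ _ => le_rfl, fun _ _ => le_rfl⟩

theorem comp (hT : IsPosDS μ T) (hS : IsPosDS μ S) : IsPosDS μ (T ∘ S) where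
  map_add f g hf hg := by
    simp only [Function.comp_apply, hS.map_add f g hf hg,
      hT.map_add _ _ (hS.map_mem hf) (hS.map_mem hg)]
  map_smul c f hf := by
    simp only [Function.comp_apply, hS.map_smul c f hf, hT.map_smul c _ (hS.map_mem hf)]
  map_pos f hf h := hT.map_pos _ (hS.map_mem hf) (hS.map_pos f hf h)
  norm_one f hf := (hT.norm_one _ (hS.map_mem hf)).trans (hS.norm_one f hf)
  norm_top f hf := (hT.norm_top _ (hS.map_mem hf)).trans (hS.norm_top f hf)

theorem iterate (hT : IsPosDS μ T) : ∀ n, IsPosDS μ T^[n]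
  | 0 => .id
  | n + 1 => (hT.iterate n).comp hT

protected theorem cesaro (hT : IsPosDS μ T) (n : ℕ) : IsPosDS μ (cesaro μ T n) where
  map_add f g hf hg := by
    simp only [cesaro, (hT.iterate _).map_add f g hf hg, Finset.sum_add_distrib, smul_add]
  map_smul c f hf := by
    simp only [cesaro, (hT.iterate _).map_smul c f hf, ← Finset.smul_sum, smul_comm c]
  map_pos f hf h :=
    smul_nonneg (by positivity) (Finset.sum_nonneg fun k _ => (hT.iterate k).map_pos f hf h)
  norm_one f hf := eLpNorm_cesaro_le le_rfl (fun k => (hT.iterate k).norm_one f hf) n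
  norm_top f hf := eLpNorm_cesaro_le le_top (fun k => (hT.iterate k).norm_top f hf) n

end IsPosDS

section Truncation

variable {μ : Measure Ω} {p η : ℝ≥0∞}

theorem rpow_mul_eLpNorm_one_indicator_le {E : Type*} [NormedAddCommGroup E] (hp : 1 ≤ p)
    (hp' : p ≠ ∞) (η : ℝ≥0∞) (f : Ω → E) :
    η ^ (p.toReal - 1) * eLpNorm ({x | η < ‖f x‖ₑ}.indicator f) 1 μ ≤
      eLpNorm f p μ ^ p.toReal := by
  have hr : 1 ≤ p.toReal := by simpa using ENNReal.toReal_mono hp' hp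
  rw [eLpNorm_one_eq_lintegral_enorm, eLpNorm_eq_lintegral_rpow_enorm_toReal (by positivity) hp',
    ← ENNReal.rpow_mul, one_div_mul_cancel (by positivity), ENNReal.rpow_one]
  refine (lintegral_const_mul_le _ _).trans (lintegral_mono fun x => ?_)
  by_cases hx : η < ‖f x‖ₑ
  · calc η ^ (p.toReal - 1) * ‖{x | η < ‖f x‖ₑ}.indicator f x‖ₑ
        = η ^ (p.toReal - 1) * ‖f x‖ₑ ^ (1 : ℝ) := by
          rw [indicator_of_mem (by exact hx), ENNReal.rpow_one]
      _ ≤ ‖f x‖ₑ ^ (p.toReal - 1) * ‖f x‖ₑ ^ (1 : ℝ) := by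
          gcongr
      _ = ‖f x‖ₑ ^ p.toReal := by
          rw [← ENNReal.rpow_add_of_nonneg _ _ (by simpa) zero_le_one, sub_add_cancel]
  · simp [indicator_of_notMem (s := {x | η < ‖f x‖ₑ}) hx]

theorem exists_truncation (η : ℝ≥0∞) (f : Ω →ₘ[μ] ℝ) :
    ∃ a b : Ω →ₘ[μ] ℝ, a =ᵐ[μ] {x | η < ‖f x‖ₑ}.indicator f ∧ eLpNorm b ⊤ μ ≤ η ∧ f = a + b := by
  have hA : MeasurableSet {x | η < ‖f x‖ₑ} := measurableSet_lt measurable_const f.measurable.enorm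
  let a : Ω →ₘ[μ] ℝ := AEEqFun.mk _ (f.aestronglyMeasurable.indicator hA)
  have ha : a =ᵐ[μ] {x | η < ‖f x‖ₑ}.indicator f := AEEqFun.coeFn_mk _ _
  refine ⟨a, f - a, ha, eLpNormEssSup_le_of_ae_enorm_bound ?_, (add_sub_cancel _ _).symm⟩
  filter_upwards [AEEqFun.coeFn_sub f a, ha] with x hsub hax
  rw [hsub, Pi.sub_apply, hax]
  by_cases hx : η < ‖f x‖ₑ
  · simp [indicator_of_mem (s := {x | η < ‖f x‖ₑ}) hx]
  · simpa [indicator_of_notMem (s := {x | η < ‖f x‖ₑ}) hx] using hx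

variable (μ) in
/-- The functions that split into an `L¹`-part and an `L^∞`-part both of norm at most `η`;
these sets, for `η > 0`, form a base of neighbourhoods of `0` in `L¹(μ) + L^∞(μ)`. -/
def l1pLinfBall (η : ℝ≥0∞) : Set (Ω →ₘ[μ] ℝ) :=
  {f | ∃ a b : Ω →ₘ[μ] ℝ, eLpNorm a 1 μ ≤ η ∧ eLpNorm b ⊤ μ ≤ η ∧ f = a + b}

theorem mem_l1pLinfBall_of_eLpNorm_le {f : Ω →ₘ[μ] ℝ} (hp : 1 ≤ p) (hf : eLpNorm f p μ ≤ η) :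
    f ∈ l1pLinfBall μ η := by
  have of_top (h : eLpNorm f ⊤ μ ≤ η) : f ∈ l1pLinfBall μ η :=
    ⟨0, f, eLpNorm_coeFn_zero.trans_le zero_le, h, (zero_add f).symm⟩
  rcases eq_or_ne p ∞ with rfl | hp'
  · exact of_top hf
  rcases eq_or_ne η ∞ with rfl | hη
  · exact of_top le_top
  rcases eq_or_ne η 0 with rfl | hη₀
  · have hf₀ := (eLpNorm_eq_zero_iff f.aestronglyMeasurable (by positivity)).1 (le_zero_iff.1 hf)
    exact of_top (by rw [eLpNorm_congr_ae hf₀, eLpNorm_zero])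
  obtain ⟨a, b, ha, hb, hab⟩ := exists_truncation η f
  refine ⟨a, b, ?_, hb, hab⟩
  have hr : 1 ≤ p.toReal := by simpa using ENNReal.toReal_mono hp' hp
  have h : η ^ (p.toReal - 1) * eLpNorm a 1 μ ≤ η ^ (p.toReal - 1) * η :=
    calc η ^ (p.toReal - 1) * eLpNorm a 1 μ ≤ eLpNorm f p μ ^ p.toReal :=
          eLpNorm_congr_ae ha ▸ rpow_mul_eLpNorm_one_indicator_le hp hp' η f
      _ ≤ η ^ p.toReal := by gcongr
      _ = η ^ (p.toReal - 1) * η := by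
          nth_rw 3 [← ENNReal.rpow_one η]
          rw [← ENNReal.rpow_add _ _ hη₀ hη, sub_add_cancel]
  exact (ENNReal.mul_le_mul_iff_right (by simp [hη₀, hη])
    (ENNReal.rpow_ne_top_of_nonneg (by linarith) hη)).1 h

theorem memL1pLinf_of_eLpNorm_ne_top {f : Ω →ₘ[μ] ℝ} (hp : 1 ≤ p) (hf : eLpNorm f p μ ≠ ∞) :
    MemL1pLinf μ f :=
  let ⟨a, b, ha, hb, hab⟩ := mem_l1pLinfBall_of_eLpNorm_le hp (le_refl (eLpNorm f p μ))
  ⟨a, b, ne_top_of_le_ne_top hf ha, ne_top_of_le_ne_top hf hb, hab⟩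

theorem memRmu_of_eLpNorm_ne_top {f : Ω →ₘ[μ] ℝ} (hp : 1 ≤ p) (hp' : p ≠ ∞)
    (hf : eLpNorm f p μ ≠ ∞) : MemRmu μ f := by
  refine ⟨memL1pLinf_of_eLpNorm_ne_top hp hf, fun lam hlam => ?_⟩
  have hfp : MemLp f p μ := ⟨f.aestronglyMeasurable, hf.lt_top⟩
  refine (measure_mono fun x hx => ?_).trans_lt
    (hfp.meas_ge_lt_top (by positivity) hp' (ε := lam.toNNReal) (by simpa using hlam))
  exact Real.toNNReal_le_iff_le_coe.2 (le_of_lt hx)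

theorem MemRmu.exists_eLpNorm_top_le {f : Ω →ₘ[μ] ℝ} (hf : MemRmu μ f) (hη : η ≠ 0) :
    ∃ a b : Ω →ₘ[μ] ℝ, eLpNorm a 1 μ ≠ ∞ ∧ eLpNorm b ⊤ μ ≤ η ∧ f = a + b := by
  obtain ⟨a, b, ha, hb, hab⟩ := exists_truncation η f
  refine ⟨a, b, ?_, hb, hab⟩
  obtain ⟨⟨g, h, hg, hh, hgh⟩, htail⟩ := hf
  let A := {x | η < ‖f x‖ₑ}
  have hA : MeasurableSet A := measurableSet_lt measurable_const f.measurable.enorm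
  have hμA : μ A < ∞ := by
    obtain ⟨lam, hlam, hlamη⟩ := ENNReal.lt_iff_exists_nnreal_btwn.1 (pos_iff_ne_zero.2 hη)
    refine (measure_mono fun x hx => ?_).trans_lt (htail lam (by simpa using hlam))
    exact_mod_cast hlamη.trans hx
  have : IsFiniteMeasure (μ.restrict A) := isFiniteMeasure_restrict.2 hμA.ne
  have hgA : MemLp g 1 (μ.restrict A) := MemLp.restrict A ⟨g.aestronglyMeasurable, hg.lt_top⟩
  have hhA : MemLp h 1 (μ.restrict A) :=
    (MemLp.restrict A ⟨h.aestronglyMeasurable, hh.lt_top⟩).mono_exponent le_top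
  have hfA : f =ᵐ[μ.restrict A] ⇑g + ⇑h := ae_restrict_of_ae (hgh ▸ AEEqFun.coeFn_add g h)
  rw [eLpNorm_congr_ae ha, eLpNorm_indicator_eq_eLpNorm_restrict hA, eLpNorm_congr_ae hfA]
  exact (hgA.add hhA).2.ne

end Truncation

section Jensen

variable {μ : Measure Ω} {T : (Ω →ₘ[μ] ℝ) → (Ω →ₘ[μ] ℝ)} {f g : Ω →ₘ[μ] ℝ}

/- `|y| ^ r / r` is the supremum over `b` of `b * y - |b| ^ q / q`, attained at
`b = ± |y| ^ (r - 1)`. -/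
theorem abs_rpow_le_of_forall_rat_mul_le {r q y z : ℝ} (hrq : r.HolderConjugate q)
    (h : ∀ b : ℚ, b * y ≤ r⁻¹ * z + |(b : ℝ)| ^ q / q) : |y| ^ r ≤ z := by
  have hreal (b : ℝ) : b * y ≤ r⁻¹ * z + |b| ^ q / q := by
    refine Rat.denseRange_cast.induction_on b (isClosed_le (by fun_prop) ?_) h
    exact continuous_const.add
      ((continuous_abs.rpow_const fun _ => .inr hrq.symm.nonneg).div_const q)
  obtain ⟨s, hs, hsy⟩ : ∃ s : ℝ, |s| = 1 ∧ s * y = |y| := by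
    rcases abs_choice y with hy | hy
    · exact ⟨1, abs_one, by rw [hy, one_mul]⟩
    · exact ⟨-1, by rw [abs_neg, abs_one], by rw [hy, neg_one_mul]⟩
  have hmul : s * |y| ^ (r - 1) * y = |y| ^ r := by
    rw [mul_right_comm, hsy, ← Real.rpow_one_add' (abs_nonneg y) (by simp [hrq.ne_zero]),
      add_sub_cancel]
  have hpow : |s * |y| ^ (r - 1)| ^ q = |y| ^ r := by
    rw [abs_mul, hs, one_mul, abs_of_nonneg (by positivity), ← Real.rpow_mul (abs_nonneg y),
      hrq.sub_one_mul_conj]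
  have hle : |y| ^ r ≤ r⁻¹ * z + |y| ^ r / q := by
    simpa only [hmul, hpow] using hreal (s * |y| ^ (r - 1))
  rw [div_eq_inv_mul, ← hrq.one_sub_inv] at hle
  exact le_of_mul_le_mul_left (by linarith) hrq.inv_pos

theorem smul_le_smul_add_smul_one_iff {b a c : ℝ} :
    b • f ≤ a • g + c • (1 : Ω →ₘ[μ] ℝ) ↔ ∀ᵐ x ∂μ, b * f x ≤ a * g x + c := by
  rw [← AEEqFun.coeFn_le]
  refine eventually_congr ?_
  filter_upwards [AEEqFun.coeFn_smul b f, AEEqFun.coeFn_smul a g,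
    AEEqFun.coeFn_add (a • g) (c • (1 : Ω →ₘ[μ] ℝ)), AEEqFun.coeFn_smul c (1 : Ω →ₘ[μ] ℝ),
    AEEqFun.coeFn_one (μ := μ) (β := ℝ)] with x h₁ h₂ h₃ h₄ h₅
  simp only [h₁, h₂, h₃, h₄, h₅, Pi.smul_apply, Pi.add_apply, Pi.one_apply, smul_eq_mul, mul_one]

namespace IsPosDS

theorem ae_abs_rpow_map_le (hT : IsPosDS μ T) {r q : ℝ} (hrq : r.HolderConjugate q)
    (hf : MemL1pLinf μ f) (hg : MemL1pLinf μ g) (hfg : ∀ᵐ x ∂μ, |f x| ^ r ≤ g x) :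
    ∀ᵐ x ∂μ, |T f x| ^ r ≤ T g x := by
  have hyoung (b : ℚ) : (b : ℝ) • f ≤ r⁻¹ • g + (|(b : ℝ)| ^ q / q) • 1 := by
    refine smul_le_smul_add_smul_one_iff.2 (hfg.mono fun x hx => ?_)
    calc b * f x ≤ |f x| ^ r / r + |(b : ℝ)| ^ q / q := by
          rw [mul_comm]; exact Real.young_inequality _ _ hrq
      _ ≤ r⁻¹ * g x + |(b : ℝ)| ^ q / q := by
          rw [div_eq_inv_mul]
          have := hrq.pos
          gcongr
  have hmap (b : ℚ) : (b : ℝ) • T f ≤ r⁻¹ • T g + (|(b : ℝ)| ^ q / q) • 1 := by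
    have hc : 0 ≤ |(b : ℝ)| ^ q / q := div_nonneg (by positivity) hrq.symm.nonneg
    have h1 := MemL1pLinf.one.smul (μ := μ) (|(b : ℝ)| ^ q / q)
    calc (b : ℝ) • T f = T ((b : ℝ) • f) := (hT.map_smul _ f hf).symm
      _ ≤ T (r⁻¹ • g + (|(b : ℝ)| ^ q / q) • 1) :=
        hT.map_mono (hf.smul _) ((hg.smul _).add h1) (hyoung b)
      _ = r⁻¹ • T g + (|(b : ℝ)| ^ q / q) • T 1 := by
        rw [hT.map_add _ _ (hg.smul _) h1, hT.map_smul _ g hg, hT.map_smul _ 1 .one]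
      _ ≤ r⁻¹ • T g + (|(b : ℝ)| ^ q / q) • 1 := by
        gcongr
        exact hT.map_one_le
  filter_upwards [ae_all_iff.2 fun b => smul_le_smul_add_smul_one_iff.1 (hmap b)] with x hx
    using abs_rpow_le_of_forall_rat_mul_le hrq hx

theorem eLpNorm_ofReal_map_le (hT : IsPosDS μ T) {r : ℝ} (hr : 1 < r)
    (hf : eLpNorm f (ENNReal.ofReal r) μ ≠ ∞) :
    eLpNorm (T f) (ENNReal.ofReal r) μ ≤ eLpNorm f (ENNReal.ofReal r) μ := by
  have hr₀ : 0 < r := by positivity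
  have hnorm (h : Ω → ℝ) :
      eLpNorm (fun x => |h x| ^ r) 1 μ = eLpNorm h (ENNReal.ofReal r) μ ^ r := by
    simpa only [one_mul, Real.norm_eq_abs] using eLpNorm_norm_rpow (p := 1) h hr₀
  let g : Ω →ₘ[μ] ℝ :=
    AEEqFun.comp (fun y => |y| ^ r) (continuous_abs.rpow_const fun _ => .inr hr₀.le) f
  have hg : g =ᵐ[μ] fun x => |f x| ^ r := AEEqFun.coeFn_comp _ _ _
  have hg₁ : eLpNorm g 1 μ = eLpNorm f (ENNReal.ofReal r) μ ^ r :=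
    (eLpNorm_congr_ae hg).trans (hnorm f)
  have hg' : MemL1pLinf μ g := memL1pLinf_of_eLpNorm_one_ne_top
    (hg₁.trans_ne (ENNReal.rpow_ne_top_of_nonneg hr₀.le hf))
  have hTfg : ∀ᵐ x ∂μ, |T f x| ^ r ≤ T g x :=
    hT.ae_abs_rpow_map_le (Real.HolderConjugate.conjExponent hr)
      (memL1pLinf_of_eLpNorm_ne_top (ENNReal.one_le_ofReal.2 hr.le) hf) hg'
      (hg.mono fun x hx => hx.ge)
  refine (ENNReal.rpow_le_rpow_iff hr₀).1 ?_
  calc eLpNorm (T f) (ENNReal.ofReal r) μ ^ r = eLpNorm (fun x => |T f x| ^ r) 1 μ :=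
        (hnorm _).symm
    _ ≤ eLpNorm (T g) 1 μ := eLpNorm_mono_ae <| hTfg.mono fun x hx => by
        rw [Real.norm_of_nonneg (by positivity)]
        exact hx.trans (le_abs_self _)
    _ ≤ eLpNorm g 1 μ := hT.norm_one g hg'
    _ = eLpNorm f (ENNReal.ofReal r) μ ^ r := hg₁

theorem eLpNorm_map_le (hT : IsPosDS μ T) {p : ℝ≥0∞} (hp : 1 ≤ p) (f : Ω →ₘ[μ] ℝ) :
    eLpNorm (T f) p μ ≤ eLpNorm f p μ := by
  rcases eq_or_ne (eLpNorm f p μ) ∞ with hf | hf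
  · exact hf ▸ le_top
  have hf' := memL1pLinf_of_eLpNorm_ne_top hp hf
  rcases eq_or_ne p ∞ with rfl | hp'
  · exact hT.norm_top f hf'
  rcases hp.eq_or_lt with rfl | hp₁
  · exact hT.norm_one f hf'
  rw [← ENNReal.ofReal_toReal hp'] at hf ⊢
  exact hT.eLpNorm_ofReal_map_le
    (by simpa using (ENNReal.toReal_lt_toReal one_ne_top hp').2 hp₁) hf

end IsPosDS

end Jensen

section MaximalInequality

variable {μ : Measure Ω} {T : (Ω →ₘ[μ] ℝ) → (Ω →ₘ[μ] ℝ)} {f M : Ω →ₘ[μ] ℝ} {lam : ℝ}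

namespace IsPosDS

theorem mul_measure_pos_le (hT : IsPosDS μ T) (hlam : 0 ≤ lam) (hM : eLpNorm M 1 μ ≠ ∞)
    (hM₀ : 0 ≤ M) (hMf : M ≤ 0 ⊔ (f - lam • 1 + T M)) :
    ENNReal.ofReal lam * μ {x | 0 < M x} ≤ eLpNorm f 1 μ := by
  have hpos : MeasurableSet {x | 0 < M x} := measurableSet_lt measurable_const M.measurable
  have hle : ∀ᵐ x ∂μ, ‖M x‖ₑ + {x | 0 < M x}.indicator (fun _ => ENNReal.ofReal lam) x ≤
      ‖f x‖ₑ + ‖T M x‖ₑ := by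
    filter_upwards [AEEqFun.coeFn_le.2 hM₀, AEEqFun.coeFn_le.2 hMf,
      AEEqFun.coeFn_sup 0 (f - lam • 1 + T M), AEEqFun.coeFn_add (f - lam • 1) (T M),
      AEEqFun.coeFn_sub f (lam • 1), AEEqFun.coeFn_smul lam (1 : Ω →ₘ[μ] ℝ),
      AEEqFun.coeFn_one (μ := μ) (β := ℝ), AEEqFun.coeFn_zero (μ := μ) (β := ℝ)]
      with x hx₀ hx h₁ h₂ h₃ h₄ h₅ h₆
    simp only [h₁, h₂, h₃, h₄, h₅, h₆, Pi.add_apply, Pi.sub_apply, Pi.smul_apply, Pi.zero_apply,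
      Pi.one_apply, smul_eq_mul, mul_one] at hx₀ hx
    rcases hx₀.eq_or_lt with hzero | hpos
    · simp [← hzero]
    have hMx : M x + lam ≤ |f x| + |T M x| := by
      linarith [(le_sup_iff.1 hx).resolve_left hpos.not_ge, le_abs_self (f x), le_abs_self (T M x)]
    rw [indicator_of_mem (by exact hpos), Real.enorm_of_nonneg hpos.le, Real.enorm_eq_ofReal_abs,
      Real.enorm_eq_ofReal_abs, ← ENNReal.ofReal_add hpos.le hlam,
      ← ENNReal.ofReal_add (abs_nonneg _) (abs_nonneg _)]
    exact ENNReal.ofReal_le_ofReal hMx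
  have hmain :
      eLpNorm M 1 μ + ENNReal.ofReal lam * μ {x | 0 < M x} ≤ eLpNorm M 1 μ + eLpNorm f 1 μ :=
    calc eLpNorm M 1 μ + ENNReal.ofReal lam * μ {x | 0 < M x}
        = ∫⁻ x, ‖M x‖ₑ + {x | 0 < M x}.indicator (fun _ => ENNReal.ofReal lam) x ∂μ := by
          rw [lintegral_add_left M.measurable.enorm, lintegral_indicator_const hpos,
            eLpNorm_one_eq_lintegral_enorm]
      _ ≤ ∫⁻ x, ‖f x‖ₑ + ‖T M x‖ₑ ∂μ := lintegral_mono_ae hle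
      _ = eLpNorm (T M) 1 μ + eLpNorm f 1 μ := by
          rw [lintegral_add_left f.measurable.enorm, add_comm, eLpNorm_one_eq_lintegral_enorm,
            eLpNorm_one_eq_lintegral_enorm]
      _ ≤ eLpNorm M 1 μ + eLpNorm f 1 μ := by
          gcongr
          exact hT.norm_one M (memL1pLinf_of_eLpNorm_one_ne_top hM)
  exact (ENNReal.add_le_add_iff_left hM).1 hmain

end IsPosDS

/-- Garsia's maximal function `max_{k ≤ N} (∑_{j < k} T^j f - k * lam)`. Its positivity set is
`{max_{1 ≤ k ≤ N} A_k f > lam}`, and it is nonnegative because of the term `k = 0`. -/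
noncomputable def garsiaMax (μ : Measure Ω) (T : (Ω →ₘ[μ] ℝ) → (Ω →ₘ[μ] ℝ)) (f : Ω →ₘ[μ] ℝ)
    (lam : ℝ) (N : ℕ) : Ω →ₘ[μ] ℝ :=
  partialSups (fun k : ℕ => birkhoffSum T id k f - (k * lam) • 1) N

theorem le_garsiaMax {k N : ℕ} (h : k ≤ N) :
    birkhoffSum T id k f - (k * lam) • 1 ≤ garsiaMax μ T f lam N :=
  le_partialSups_of_le (fun k : ℕ => birkhoffSum T id k f - (k * lam) • (1 : Ω →ₘ[μ] ℝ)) h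

theorem garsiaMax_nonneg (N : ℕ) : 0 ≤ garsiaMax μ T f lam N := by
  simpa using le_garsiaMax (T := T) (f := f) (lam := lam) N.zero_le

theorem ae_garsiaMax_pos_of_lt_cesaro (hlam : 0 ≤ lam) {k N : ℕ} (h : k ≤ N) :
    ∀ᵐ x ∂μ, lam < cesaro μ T k f x → 0 < garsiaMax μ T f lam N x := by
  rcases Nat.eq_zero_or_pos k with rfl | hk
  · have hzero : cesaro μ T 0 f = 0 := by simp [cesaro]
    filter_upwards [hzero ▸ AEEqFun.coeFn_zero (μ := μ) (β := ℝ)] with x hx hlt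
    exact absurd (hlt.trans_eq hx) hlam.not_gt
  have hk' : (0 : ℝ) < k := by exact_mod_cast hk
  have hle : (k : ℝ) • cesaro μ T k f ≤ (1 : ℝ) • garsiaMax μ T f lam N + (k * lam) • 1 := by
    rw [one_smul, ← sub_le_iff_le_add, cesaro, smul_inv_smul₀ hk'.ne']
    exact le_garsiaMax h
  filter_upwards [smul_le_smul_add_smul_one_iff.1 hle] with x hx hlt
  linarith [mul_lt_mul_of_pos_left hlt hk']

namespace IsPosDS

theorem eLpNorm_one_garsiaMax_ne_top (hT : IsPosDS μ T) (hlam : 0 ≤ lam)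
    (hf : eLpNorm f 1 μ ≠ ∞) (N : ℕ) : eLpNorm (garsiaMax μ T f lam N) 1 μ ≠ ∞ := by
  have hle : garsiaMax μ T f lam N ≤ ∑ j ∈ Finset.range N, |T^[j] f| := by
    refine partialSups_le _ _ _ fun k hk => ?_
    calc birkhoffSum T id k f - (k * lam) • 1 ≤ birkhoffSum T id k f :=
          sub_le_self _ (smul_nonneg (by positivity) zero_le_one)
      _ ≤ ∑ j ∈ Finset.range k, |T^[j] f| := Finset.sum_le_sum fun j _ => le_abs_self _
      _ ≤ ∑ j ∈ Finset.range N, |T^[j] f| :=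
          Finset.sum_le_sum_of_subset_of_nonneg (Finset.range_mono hk) fun _ _ _ => abs_nonneg _
  have habs : |garsiaMax μ T f lam N| ≤ |∑ j ∈ Finset.range N, (|T^[j] f|)| := by
    rw [abs_of_nonneg (garsiaMax_nonneg N)]
    exact hle.trans (le_abs_self _)
  refine ne_top_of_le_ne_top (ENNReal.sum_ne_top.2 fun j _ => ?_)
    ((eLpNorm_coeFn_mono_abs habs).trans (eLpNorm_coeFn_sum_le le_rfl _ _))
  refine ne_top_of_le_ne_top hf ((eLpNorm_coeFn_mono_abs (abs_abs _).le).trans ?_)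
  exact (hT.iterate j).norm_one f (memL1pLinf_of_eLpNorm_one_ne_top hf)

theorem memL1pLinf_birkhoffSum (hT : IsPosDS μ T) (hf : MemL1pLinf μ f) (k : ℕ) :
    MemL1pLinf μ (birkhoffSum T id k f) :=
  .sum fun j _ => (hT.iterate j).map_mem hf

theorem birkhoffSum_id_succ (hT : IsPosDS μ T) (hf : MemL1pLinf μ f) (k : ℕ) :
    birkhoffSum T id (k + 1) f = f + T (birkhoffSum T id k f) := by
  induction k with
  | zero => rw [birkhoffSum_zero, hT.map_zero, add_zero, birkhoffSum_one, id]
  | succ k ih =>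
    rw [birkhoffSum_succ]
    nth_rw 1 [ih]
    rw [birkhoffSum_succ, id, id, hT.map_add _ _ (hT.memL1pLinf_birkhoffSum hf k)
      ((hT.iterate k).map_mem hf), Function.iterate_succ_apply', add_assoc]

theorem garsiaMax_le (hT : IsPosDS μ T) (hlam : 0 ≤ lam) (hf : eLpNorm f 1 μ ≠ ∞) (N : ℕ) :
    garsiaMax μ T f lam N ≤ 0 ⊔ (f - lam • 1 + T (garsiaMax μ T f lam N)) := by
  have hf' := memL1pLinf_of_eLpNorm_one_ne_top hf
  refine partialSups_le _ _ _ fun k hk => ?_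
  rcases k with _ | k
  · simp
  refine le_sup_of_le_right ?_
  have hS := hT.memL1pLinf_birkhoffSum hf' k
  have h1 := MemL1pLinf.one.smul (μ := μ) (k * lam)
  have hM := memL1pLinf_of_eLpNorm_one_ne_top (hT.eLpNorm_one_garsiaMax_ne_top hlam hf N)
  calc birkhoffSum T id (k + 1) f - ((k + 1 : ℕ) * lam) • 1
      = f - lam • 1 + (T (birkhoffSum T id k f) - (k * lam) • 1) := by
        rw [hT.birkhoffSum_id_succ hf']
        push_cast
        module
    _ ≤ f - lam • 1 + (T (birkhoffSum T id k f) - (k * lam) • T 1) := by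
        gcongr
        exact hT.map_one_le
    _ = f - lam • 1 + T (birkhoffSum T id k f - (k * lam) • 1) := by
        rw [hT.map_sub hS h1, hT.map_smul _ _ .one]
    _ ≤ f - lam • 1 + T (garsiaMax μ T f lam N) := by
        gcongr
        exact hT.map_mono (hS.sub h1) hM (le_garsiaMax (by lia))

theorem mul_measure_exists_lt_cesaro_le (hT : IsPosDS μ T) (hlam : 0 ≤ lam) (f : Ω →ₘ[μ] ℝ) :
    ENNReal.ofReal lam * μ {x | ∃ n, lam < cesaro μ T n f x} ≤ eLpNorm f 1 μ := by
  rcases eq_or_ne (eLpNorm f 1 μ) ∞ with hf | hf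
  · exact hf ▸ le_top
  have hbound (N : ℕ) :
      ENNReal.ofReal lam * μ {x | ∃ n ≤ N, lam < cesaro μ T n f x} ≤ eLpNorm f 1 μ := by
    have hsub : {x | ∃ n ≤ N, lam < cesaro μ T n f x} ≤ᵐ[μ] {x | 0 < garsiaMax μ T f lam N x} := by
      have hpos := ae_all_iff.2 fun k : Fin (N + 1) =>
        ae_garsiaMax_pos_of_lt_cesaro (μ := μ) (T := T) (f := f) hlam (Fin.is_le k)
      filter_upwards [hpos] with x hx ⟨n, hn, hlt⟩
      exact hx ⟨n, Nat.lt_succ_of_le hn⟩ hlt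
    exact (mul_le_mul_right (measure_mono_ae hsub) _).trans (hT.mul_measure_pos_le hlam
      (hT.eLpNorm_one_garsiaMax_ne_top hlam hf N) (garsiaMax_nonneg N) (hT.garsiaMax_le hlam hf N))
  have hunion : {x | ∃ n, lam < cesaro μ T n f x} =
      ⋃ N, {x | ∃ n ≤ N, lam < cesaro μ T n f x} := by
    ext x
    simp only [mem_ofPred_eq, mem_iUnion]
    exact ⟨fun ⟨n, hn⟩ => ⟨n, n, le_rfl, hn⟩, fun ⟨_, n, _, hn⟩ => ⟨n, hn⟩⟩
  have hmono : Monotone fun N => {x | ∃ n ≤ N, lam < cesaro μ T n f x} :=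
    fun N N' hN x ⟨n, hn, hx⟩ => ⟨n, hn.trans hN, hx⟩
  rw [hunion, hmono.measure_iUnion, ENNReal.mul_iSup]
  exact iSup_le hbound

theorem mul_measure_exists_lt_abs_cesaro_le (hT : IsPosDS μ T) (hlam : 0 ≤ lam)
    (f : Ω →ₘ[μ] ℝ) :
    ENNReal.ofReal lam * μ {x | ∃ n, lam < |cesaro μ T n f x|} ≤ eLpNorm f 1 μ := by
  rcases eq_or_ne (eLpNorm f 1 μ) ∞ with hf | hf
  · exact hf ▸ le_top
  have hf' := memL1pLinf_of_eLpNorm_one_ne_top hf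
  calc ENNReal.ofReal lam * μ {x | ∃ n, lam < |cesaro μ T n f x|}
      ≤ ENNReal.ofReal lam * μ {x | ∃ n, lam < cesaro μ T n |f| x} := by
        refine mul_le_mul_right (measure_mono_ae ?_) _
        filter_upwards [ae_all_iff.2 fun n => AEEqFun.coeFn_le.2 ((hT.cesaro n).abs_map_le hf'),
          ae_all_iff.2 fun n => AEEqFun.coeFn_abs (cesaro μ T n f)] with x hle habs ⟨n, hn⟩
        exact ⟨n, hn.trans_le (habs n ▸ hle n)⟩
    _ ≤ eLpNorm ⇑|f| 1 μ := hT.mul_measure_exists_lt_cesaro_le hlam |f|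
    _ ≤ eLpNorm f 1 μ := eLpNorm_coeFn_mono_abs (abs_abs f).le

end IsPosDS

end MaximalInequality

section AlmostUniformConvergence

variable {μ : Measure Ω}

theorem auTendsto_of_forall_tendstoUniformlyOn {ι : Type*} {l : Filter ι} {F : ι → Ω →ₘ[μ] ℝ}
    {f : Ω →ₘ[μ] ℝ}
    (h : ∀ δ : ℝ≥0∞, δ ≠ 0 → ∃ E : Set Ω, μ Eᶜ ≤ δ ∧ TendstoUniformlyOn (fun i => ⇑(F i)) f l E) :
    AuTendsto μ l F f := by
  intro δ hδ
  obtain ⟨E, hμE, hE⟩ := h (ENNReal.ofReal δ) (by simpa using hδ)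
  refine ⟨(toMeasurable μ Eᶜ)ᶜ, (measurableSet_toMeasurable _ _).compl,
    by rwa [compl_compl, measure_toMeasurable], ENNReal.tendsto_nhds_zero.2 fun η hη => ?_⟩
  obtain ⟨ε, hε, hεη⟩ := ENNReal.lt_iff_exists_nnreal_btwn.1 hη
  filter_upwards [Metric.tendstoUniformlyOn_iff.1 hE ε (by simpa using hε)] with i hi
  refine (eLpNormEssSup_le_of_ae_enorm_bound ?_).trans hεη.le
  filter_upwards [AEEqFun.coeFn_sub (F i) f] with x hx
  by_cases hxE : x ∈ (toMeasurable μ Eᶜ)ᶜ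
  · have hxE' : x ∈ E := by_contra fun h => hxE (subset_toMeasurable _ _ h)
    rw [indicator_of_mem hxE, hx, Pi.sub_apply, enorm_le_coe, ← NNReal.coe_le_coe, coe_nnnorm,
      ← dist_eq_norm, dist_comm]
    exact (hi x hxE').le
  · rw [indicator_of_notMem hxE, enorm_zero]
    exact zero_le

/-- The sequence `F` is almost uniformly Cauchy, in quantitative form: the exceptional set may
depend on the precision `ε` as well as on its size `δ`. -/
def AuCauchy (μ : Measure Ω) (F : ℕ → Ω →ₘ[μ] ℝ) : Prop :=
  ∀ ε : ℝ, 0 < ε → ∀ δ : ℝ≥0∞, δ ≠ 0 → ∃ N : ℕ,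
    μ {x | ∃ m n, N ≤ m ∧ N ≤ n ∧ ε < |F m x - F n x|} ≤ δ

namespace AuCauchy

variable {F : ℕ → Ω →ₘ[μ] ℝ}

theorem exists_uniformCauchySeqOn (hF : AuCauchy μ F) {δ : ℝ≥0∞} (hδ : δ ≠ 0) :
    ∃ E : Set Ω, μ Eᶜ ≤ δ ∧ UniformCauchySeqOn (fun n => ⇑(F n)) atTop E := by
  obtain ⟨d, hd, hdδ⟩ := ENNReal.exists_pos_sum_of_countable hδ ℕ
  choose N hN using fun k : ℕ => hF (1 / (k + 1)) (by positivity) (d k) (by simpa using (hd k).ne')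
  refine ⟨(⋃ k : ℕ, {x | ∃ m n, N k ≤ m ∧ N k ≤ n ∧ 1 / ((k : ℝ) + 1) < |F m x - F n x|})ᶜ, ?_,
    Metric.uniformCauchySeqOn_iff.2 fun ε hε => ?_⟩
  · rw [compl_compl]
    exact (measure_iUnion_le _).trans ((ENNReal.tsum_le_tsum hN).trans hdδ.le)
  · obtain ⟨k, hk⟩ := exists_nat_one_div_lt hε
    refine ⟨N k, fun m hm n hn x hx => lt_of_le_of_lt ?_ hk⟩
    exact not_lt.1 fun hlt => hx (mem_iUnion.2 ⟨k, m, n, hm, hn, hlt⟩)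

theorem ae_exists_tendsto (hF : AuCauchy μ F) :
    ∀ᵐ x ∂μ, ∃ l, Tendsto (fun n => F n x) atTop (𝓝 l) := by
  refine ae_iff.2 (le_antisymm (_root_.le_of_forall_pos_le_add fun δ hδ => ?_) zero_le)
  obtain ⟨E, hμE, hE⟩ := hF.exists_uniformCauchySeqOn hδ.ne'
  rw [zero_add]
  refine (measure_mono ?_).trans hμE
  exact fun x hx hxE => hx (cauchySeq_tendsto_of_complete (hE.cauchySeq hxE))

theorem auTendsto (hF : AuCauchy μ F) {f : Ω →ₘ[μ] ℝ}
    (hf : ∀ᵐ x ∂μ, Tendsto (fun n => F n x) atTop (𝓝 (f x))) : AuTendsto μ atTop F f := by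
  refine auTendsto_of_forall_tendstoUniformlyOn fun δ hδ => ?_
  obtain ⟨E, hμE, hE⟩ := hF.exists_uniformCauchySeqOn hδ
  refine ⟨E ∩ {x | Tendsto (fun n => F n x) atTop (𝓝 (f x))}, ?_,
    (hE.mono inter_subset_left).tendstoUniformlyOn_of_tendsto fun x hx => hx.2⟩
  have hnull : μ {x | Tendsto (fun n => F n x) atTop (𝓝 (f x))}ᶜ = 0 := ae_iff.1 hf
  rw [compl_inter]
  exact (measure_union_le _ _).trans (by rwa [hnull, add_zero])

theorem exists_auTendsto (hF : AuCauchy μ F) : ∃ f : Ω →ₘ[μ] ℝ, AuTendsto μ atTop F f ∧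
    ∀ᵐ x ∂μ, Tendsto (fun n => F n x) atTop (𝓝 (f x)) := by
  obtain ⟨f, hf, hlim⟩ := exists_stronglyMeasurable_limit_of_tendsto_ae
    (fun n => (F n).aestronglyMeasurable) hF.ae_exists_tendsto
  let g : Ω →ₘ[μ] ℝ := AEEqFun.mk f hf.aestronglyMeasurable
  have hg : ∀ᵐ x ∂μ, Tendsto (fun n => F n x) atTop (𝓝 (g x)) := by
    filter_upwards [AEEqFun.coeFn_mk f hf.aestronglyMeasurable, hlim] with x hx hlimx
    rwa [hx]
  exact ⟨g, hF.auTendsto hg, hg⟩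

theorem of_approx (h : ∀ ε : ℝ, 0 < ε → ∀ δ : ℝ≥0∞, δ ≠ 0 → ∃ G : ℕ → Ω →ₘ[μ] ℝ,
    AuCauchy μ G ∧ μ {x | ∃ n, ε < |F n x - G n x|} ≤ δ) : AuCauchy μ F := by
  intro ε hε δ hδ
  have hδ₂ : δ / 2 ≠ 0 := (ENNReal.half_pos hδ).ne'
  obtain ⟨G, hG, hFG⟩ := h (ε / 3) (by positivity) (δ / 2) hδ₂
  obtain ⟨N, hN⟩ := hG (ε / 3) (by positivity) (δ / 2) hδ₂
  refine ⟨N, ?_⟩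
  calc μ {x | ∃ m n, N ≤ m ∧ N ≤ n ∧ ε < |F m x - F n x|}
      ≤ μ ({x | ∃ n, ε / 3 < |F n x - G n x|} ∪
          {x | ∃ m n, N ≤ m ∧ N ≤ n ∧ ε / 3 < |G m x - G n x|}) := by
        refine measure_mono fun x ⟨m, n, hm, hn, hlt⟩ => or_iff_not_imp_left.2 fun hx => ?_
        have hclose (k : ℕ) : |F k x - G k x| ≤ ε / 3 := not_lt.1 fun hk => hx ⟨k, hk⟩
        refine ⟨m, n, hm, hn, ?_⟩
        have hn' := hclose n
        rw [abs_sub_comm] at hn'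
        linarith [hclose m, abs_sub_le (F m x) (G m x) (F n x), abs_sub_le (G m x) (G n x) (F n x)]
    _ ≤ δ / 2 + δ / 2 := (measure_union_le _ _).trans (add_le_add hFG hN)
    _ = δ := ENNReal.add_halves δ

theorem of_tendsto_eLpNorm_top {f : Ω →ₘ[μ] ℝ}
    (h : Tendsto (fun n => eLpNorm ⇑(F n - f) ⊤ μ) atTop (𝓝 0)) : AuCauchy μ F := by
  intro ε hε δ _
  obtain ⟨N, hN⟩ := eventually_atTop.1 <|
    ENNReal.tendsto_nhds_zero.1 h (ENNReal.ofReal (ε / 2)) (by simpa using hε)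
  have hclose : ∀ᵐ x ∂μ, ∀ n, N ≤ n → |F n x - f x| ≤ ε / 2 := by
    refine ae_all_iff.2 fun n => ?_
    filter_upwards [ae_le_eLpNormEssSup (f := F n - f) (μ := μ), AEEqFun.coeFn_sub (F n) f]
      with x hx hsub hn
    rw [hsub, Pi.sub_apply, Real.enorm_eq_ofReal_abs] at hx
    exact (ENNReal.ofReal_le_ofReal_iff (by positivity)).1 (hx.trans (hN n hn))
  refine ⟨N, (measure_mono_null ?_ (ae_iff.1 hclose)).trans_le zero_le⟩
  rintro x ⟨m, n, hm, hn, hlt⟩ hx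
  have hn' := hx n hn
  rw [abs_sub_comm] at hn'
  linarith [hx m hm, abs_sub_le (F m x) (f x) (F n x)]

end AuCauchy

end AlmostUniformConvergence

section ClosedSubspace

variable {μ : Measure Ω} {T : (Ω →ₘ[μ] ℝ) → (Ω →ₘ[μ] ℝ)} {f g : Ω →ₘ[μ] ℝ}

namespace IsPosDS

theorem measure_exists_lt_abs_cesaro_sub_le (hT : IsPosDS μ T) {ε : ℝ} (hε : 0 < ε) {δ : ℝ≥0∞}
    (hf : MemL1pLinf μ f) (hg : MemL1pLinf μ g)
    (hfg : f - g ∈ l1pLinfBall μ (min (ENNReal.ofReal (ε / 2)) (ENNReal.ofReal (ε / 2) * δ))) :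
    μ {x | ∃ n, ε < |cesaro μ T n f x - cesaro μ T n g x|} ≤ δ := by
  obtain ⟨a, b, ha, hb, hab⟩ := hfg
  have hε' : ENNReal.ofReal (ε / 2) ≠ 0 := by simpa using hε
  have ha₁ : MemL1pLinf μ a := memL1pLinf_of_eLpNorm_one_ne_top
    (ne_top_of_le_ne_top ofReal_ne_top (ha.trans (min_le_left _ _)))
  have hb₁ : MemL1pLinf μ b := memL1pLinf_of_eLpNorm_top_ne_top
    (ne_top_of_le_ne_top ofReal_ne_top (hb.trans (min_le_left _ _)))
  have hsplit (n : ℕ) : cesaro μ T n f - cesaro μ T n g = cesaro μ T n a + cesaro μ T n b := by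
    rw [← (hT.cesaro n).map_sub hf hg, hab, (hT.cesaro n).map_add a b ha₁ hb₁]
  have hsub : {x | ∃ n, ε < |cesaro μ T n f x - cesaro μ T n g x|} ≤ᵐ[μ]
      {x | ∃ n, ε / 2 < |cesaro μ T n a x|} := by
    filter_upwards [ae_all_iff.2 fun n => AEEqFun.coeFn_sub (cesaro μ T n f) (cesaro μ T n g),
      ae_all_iff.2 fun n => AEEqFun.coeFn_add (cesaro μ T n a) (cesaro μ T n b),
      ae_all_iff.2 fun n => ae_le_eLpNormEssSup (f := cesaro μ T n b) (μ := μ)]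
      with x hx₁ hx₂ hx₃ ⟨n, hn⟩
    refine ⟨n, ?_⟩
    have hbn : |cesaro μ T n b x| ≤ ε / 2 := by
      refine (ENNReal.ofReal_le_ofReal_iff (by positivity)).1 ?_
      rw [← Real.enorm_eq_ofReal_abs]
      exact (hx₃ n).trans (((hT.cesaro n).norm_top b hb₁).trans (hb.trans (min_le_left _ _)))
    have heq : cesaro μ T n f x - cesaro μ T n g x = cesaro μ T n a x + cesaro μ T n b x := by
      rw [← Pi.sub_apply, ← hx₁ n, hsplit, hx₂ n, Pi.add_apply]
    rw [heq] at hn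
    linarith [abs_add_le (cesaro μ T n a x) (cesaro μ T n b x)]
  refine (measure_mono_ae hsub).trans ((ENNReal.mul_le_mul_iff_right hε' ofReal_ne_top).1 ?_)
  exact (hT.mul_measure_exists_lt_abs_cesaro_le (by positivity) a).trans
    (ha.trans (min_le_right _ _))

theorem auCauchy_cesaro_of_approx (hT : IsPosDS μ T) (hf : MemL1pLinf μ f)
    (h : ∀ η : ℝ≥0∞, η ≠ 0 → ∃ g, MemL1pLinf μ g ∧
      AuCauchy μ (fun n => cesaro μ T n g) ∧ f - g ∈ l1pLinfBall μ η) :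
    AuCauchy μ (fun n => cesaro μ T n f) := by
  refine AuCauchy.of_approx fun ε hε δ hδ => ?_
  have hε' : ENNReal.ofReal (ε / 2) ≠ 0 := by simpa using hε
  obtain ⟨g, hg, hgc, hfg⟩ := h (min (ENNReal.ofReal (ε / 2)) (ENNReal.ofReal (ε / 2) * δ))
    (lt_min (pos_iff_ne_zero.2 hε') (pos_iff_ne_zero.2 (mul_ne_zero hε' hδ))).ne'
  exact ⟨_, hgc, hT.measure_exists_lt_abs_cesaro_sub_le hε hf hg hfg⟩

end IsPosDS

end ClosedSubspace

section MeanErgodic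

theorem exists_map_sub_eq_birkhoffAverage_sub {𝕜 M : Type*} [DivisionRing 𝕜] [CharZero 𝕜]
    [AddCommGroup M] [Module 𝕜 M] (L : M →ₗ[𝕜] M) {n : ℕ} (hn : n ≠ 0) (x : M) :
    ∃ w, L w - w = birkhoffAverage 𝕜 L id n x - x := by
  have htelescope (k : ℕ) : L (birkhoffSum L id k x) - birkhoffSum L id k x = L^[k] x - x := by
    have hcomm : L (birkhoffSum L id k x) = birkhoffSum L id k (L x) := by
      simp only [birkhoffSum, map_sum, id, ← Function.iterate_succ_apply',
        Function.iterate_succ_apply]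
    rw [hcomm, birkhoffSum_apply_sub_birkhoffSum, id, id]
  refine ⟨(n : 𝕜)⁻¹ • ∑ k ∈ Finset.range n, birkhoffSum L id k x, ?_⟩
  rw [map_smul, map_sum, ← smul_sub, ← Finset.sum_sub_distrib,
    Finset.sum_congr rfl fun k _ => htelescope k, Finset.sum_sub_distrib, Finset.sum_const,
    Finset.card_range, ← Nat.cast_smul_eq_nsmul 𝕜, smul_sub, inv_smul_smul₀ (Nat.cast_ne_zero.2 hn)]
  rfl

theorem tendsto_birkhoffAverage_birkhoffAverage_sub {𝕜 E : Type*} [RCLike 𝕜]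
    [NormedAddCommGroup E] [NormedSpace 𝕜 E] (L : E →L[𝕜] E) (hL : ‖L‖ ≤ 1) {n : ℕ} (hn : n ≠ 0)
    (x : E) :
    Tendsto (fun m => birkhoffAverage 𝕜 L id m (birkhoffAverage 𝕜 L id n x - x)) atTop (𝓝 0) := by
  obtain ⟨w, hw⟩ : ∃ w, L w - w = birkhoffAverage 𝕜 L id n x - x :=
    exists_map_sub_eq_birkhoffAverage_sub (L : E →ₗ[𝕜] E) hn x
  have hlip : LipschitzWith 1 L := L.lipschitz.weaken hL
  have hbdd : Bornology.IsBounded (range fun k => id (L^[k] w)) := by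
    refine isBounded_iff_forall_norm_le.2 ⟨‖w‖, forall_mem_range.2 fun k => ?_⟩
    simpa [iterate_map_zero L k] using (hlip.iterate k).dist_le_mul w 0
  refine (tendsto_birkhoffAverage_apply_sub_birkhoffAverage 𝕜 hbdd).congr fun m => ?_
  rw [← hw]
  simp only [birkhoffAverage, birkhoffSum, id, iterate_map_sub, Finset.sum_sub_distrib, smul_sub]

variable {μ : Measure Ω} {T : (Ω →ₘ[μ] ℝ) → (Ω →ₘ[μ] ℝ)} {f h : Ω →ₘ[μ] ℝ}

namespace IsPosDS

theorem norm_le_of_coe_eq_map (hT : IsPosDS μ T) {p : ℝ≥0∞} (hp : 1 ≤ p) {g k : Lp ℝ p μ}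
    (hgk : (g : Ω →ₘ[μ] ℝ) = T k) : ‖g‖ ≤ ‖k‖ := by
  rw [Lp.norm_def, Lp.norm_def, hgk]
  exact ENNReal.toReal_mono (Lp.eLpNorm_ne_top k) (hT.eLpNorm_map_le hp k)

/-- The contraction of `L^p(μ)` induced by a positive Dunford–Schwartz operator. -/
noncomputable def toLp (hT : IsPosDS μ T) (p : ℝ≥0∞) [hp : Fact (1 ≤ p)] :
    Lp ℝ p μ →L[ℝ] Lp ℝ p μ :=
  have hmem (g : Lp ℝ p μ) : MemL1pLinf μ g :=
    memL1pLinf_of_eLpNorm_ne_top hp.out (Lp.eLpNorm_ne_top g)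
  LinearMap.mkContinuous
    { toFun g := ⟨T g, (hT.eLpNorm_map_le hp.out g).trans_lt (Lp.eLpNorm_lt_top g)⟩
      map_add' g h := Subtype.ext (hT.map_add g h (hmem g) (hmem h))
      map_smul' c g := Subtype.ext (hT.map_smul c g (hmem g)) }
    1 fun _ => (hT.norm_le_of_coe_eq_map hp.out rfl).trans_eq (one_mul _).symm

variable {p : ℝ≥0∞} [hp : Fact (1 ≤ p)]

theorem coe_toLp (hT : IsPosDS μ T) (g : Lp ℝ p μ) : (hT.toLp p g : Ω →ₘ[μ] ℝ) = T g :=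
  rfl

theorem norm_toLp_le (hT : IsPosDS μ T) : ‖hT.toLp p‖ ≤ 1 :=
  ContinuousLinearMap.opNorm_le_bound _ zero_le_one fun g =>
    (hT.norm_le_of_coe_eq_map hp.out (hT.coe_toLp g)).trans_eq (one_mul _).symm

theorem coe_birkhoffAverage_toLp (hT : IsPosDS μ T) (n : ℕ) (g : Lp ℝ p μ) :
    ((birkhoffAverage ℝ (hT.toLp p) id n g : Lp ℝ p μ) : Ω →ₘ[μ] ℝ) = cesaro μ T n g := by
  have hiter (k : ℕ) : ((hT.toLp p)^[k] g : Ω →ₘ[μ] ℝ) = T^[k] g :=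
    Function.Semiconj.iterate_right (f := ((↑) : Lp ℝ p μ → Ω →ₘ[μ] ℝ)) hT.coe_toLp k g
  exact (map_birkhoffAverage ℝ ℝ (Lp.LpSubmodule ℝ ℝ p μ).subtype _ _ _ _).trans
    (congr_arg ((n : ℝ)⁻¹ • ·) (Finset.sum_congr rfl fun k _ => hiter k))

theorem exists_tendsto_eLpNorm_two_cesaro_sub (hT : IsPosDS μ T) (hf : eLpNorm f 2 μ ≠ ∞) :
    ∃ h : Ω →ₘ[μ] ℝ, eLpNorm h 2 μ ≠ ∞ ∧ T h = h ∧
      Tendsto (fun n => eLpNorm ⇑(cesaro μ T n f - h) 2 μ) atTop (𝓝 0) := by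
  let L := hT.toLp 2
  let f₂ : Lp ℝ 2 μ := ⟨f, hf.lt_top⟩
  let h₂ := (L.eqLocus (1 : Lp ℝ 2 μ →L[ℝ] Lp ℝ 2 μ)).orthogonalProjectionOnto f₂
  have hlim : Tendsto (birkhoffAverage ℝ L id · f₂) atTop (𝓝 (h₂ : Lp ℝ 2 μ)) :=
    L.tendsto_birkhoffAverage_orthogonalProjection hT.norm_toLp_le f₂
  refine ⟨(h₂ : Lp ℝ 2 μ), Lp.eLpNorm_ne_top _, congr_arg Subtype.val h₂.2, ?_⟩
  refine (tendsto_iff_edist_tendsto_0.1 hlim).congr fun n => ?_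
  rw [Lp.edist_def, ← hT.coe_birkhoffAverage_toLp n f₂]
  exact eLpNorm_congr_ae (AEEqFun.coeFn_sub _ _).symm

theorem tendsto_eLpNorm_top_cesaro_cesaro_sub (hT : IsPosDS μ T) (hf : eLpNorm f ⊤ μ ≠ ∞) {n : ℕ}
    (hn : n ≠ 0) :
    Tendsto (fun m => eLpNorm (cesaro μ T m (cesaro μ T n f - f)) ⊤ μ) atTop (𝓝 0) := by
  let f' : Lp ℝ ⊤ μ := ⟨f, hf.lt_top⟩
  refine (tendsto_zero_iff_enorm_tendsto_zero.1
    (tendsto_birkhoffAverage_birkhoffAverage_sub (hT.toLp ⊤) hT.norm_toLp_le hn f')).congr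
      fun m => ?_
  rw [Lp.enorm_def, hT.coe_birkhoffAverage_toLp, AddSubgroup.coe_sub,
    hT.coe_birkhoffAverage_toLp]

theorem auCauchy_cesaro_sub (hT : IsPosDS μ T) (hh : MemL1pLinf μ h) (hTh : T h = h)
    (hf : eLpNorm f ⊤ μ ≠ ∞) {n : ℕ} (hn : n ≠ 0) :
    AuCauchy μ (fun m => cesaro μ T m (h - (cesaro μ T n f - f))) := by
  refine AuCauchy.of_tendsto_eLpNorm_top (f := h) <|
    (hT.tendsto_eLpNorm_top_cesaro_cesaro_sub hf hn).congr' ?_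
  have hf' := memL1pLinf_of_eLpNorm_top_ne_top hf
  filter_upwards [eventually_ne_atTop 0] with m hm
  have hmh : cesaro μ T m h = h :=
    Function.IsFixedPt.birkhoffAverage_eq ℝ hTh id (Nat.cast_ne_zero.2 hm)
  rw [(hT.cesaro m).map_sub hh (((hT.cesaro n).map_mem hf').sub hf'), hmh, sub_sub_cancel_left,
    eLpNorm_congr_ae (AEEqFun.coeFn_neg _), eLpNorm_neg]

theorem auCauchy_cesaro_of_eLpNorm_two_top (hT : IsPosDS μ T) (hf₂ : eLpNorm f 2 μ ≠ ∞)
    (hf : eLpNorm f ⊤ μ ≠ ∞) : AuCauchy μ (fun n => cesaro μ T n f) := by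
  have hf' := memL1pLinf_of_eLpNorm_top_ne_top hf
  obtain ⟨h, hh₂, hTh, hlim⟩ := hT.exists_tendsto_eLpNorm_two_cesaro_sub hf₂
  have hh := memL1pLinf_of_eLpNorm_ne_top one_le_two hh₂
  refine hT.auCauchy_cesaro_of_approx hf' fun η hη => ?_
  obtain ⟨n, hnη, hn⟩ := ((ENNReal.tendsto_nhds_zero.1 hlim η (pos_iff_ne_zero.2 hη)).and
    (eventually_ne_atTop 0)).exists
  refine ⟨h - (cesaro μ T n f - f), hh.sub (((hT.cesaro n).map_mem hf').sub hf'),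
    hT.auCauchy_cesaro_sub hh hTh hf hn, ?_⟩
  have heq : f - (h - (cesaro μ T n f - f)) = cesaro μ T n f - h := by abel
  exact heq ▸ mem_l1pLinfBall_of_eLpNorm_le one_le_two hnη

end IsPosDS

end MeanErgodic

section Convergence

variable {μ : Measure Ω} {T : (Ω →ₘ[μ] ℝ) → (Ω →ₘ[μ] ℝ)} {f : Ω →ₘ[μ] ℝ}

theorem MemRmu.exists_sub_mem_l1pLinfBall (hf : MemRmu μ f) {η : ℝ≥0∞} (hη : η ≠ 0) :
    ∃ s : Ω →ₘ[μ] ℝ, eLpNorm s 2 μ ≠ ∞ ∧ eLpNorm s ⊤ μ ≠ ∞ ∧ f - s ∈ l1pLinfBall μ η := by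
  obtain ⟨a, b, ha, hb, rfl⟩ := hf.exists_eLpNorm_top_le hη
  have ha' : MemLp a 1 μ := ⟨a.aestronglyMeasurable, ha.lt_top⟩
  obtain ⟨s, has, hs⟩ := ha'.exists_simpleFunc_eLpNorm_sub_lt one_ne_top hη
  let s' : Ω →ₘ[μ] ℝ := AEEqFun.mk s s.aestronglyMeasurable
  have hs' : s' =ᵐ[μ] s := AEEqFun.coeFn_mk _ _
  have hs₂ : MemLp s 2 μ := (SimpleFunc.memLp_iff two_ne_zero ofNat_ne_top).2
    ((SimpleFunc.memLp_iff one_ne_zero one_ne_top).1 hs)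
  refine ⟨s', eLpNorm_congr_ae hs' ▸ hs₂.2.ne, eLpNorm_congr_ae hs' ▸ (s.memLp_top μ).2.ne,
    a - s', b, ?_, hb, add_sub_right_comm a b s'⟩
  rw [eLpNorm_congr_ae ((AEEqFun.coeFn_sub a s').trans (EventuallyEq.rfl.sub hs'))]
  exact has.le

theorem IsPosDS.auCauchy_cesaro (hT : IsPosDS μ T) (hf : MemRmu μ f) :
    AuCauchy μ (fun n => cesaro μ T n f) := by
  refine hT.auCauchy_cesaro_of_approx hf.1 fun η hη => ?_
  obtain ⟨s, hs₂, hs, hfs⟩ := hf.exists_sub_mem_l1pLinfBall hη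
  exact ⟨s, memL1pLinf_of_eLpNorm_top_ne_top hs, hT.auCauchy_cesaro_of_eLpNorm_two_top hs₂ hs, hfs⟩

end Convergence

theorem cesaro_auTendsto_of_memLp_general (μ : Measure Ω)
    (T : (Ω →ₘ[μ] ℝ) → (Ω →ₘ[μ] ℝ)) (hT : IsPosDS μ T) (f : Ω →ₘ[μ] ℝ) (hf : MemRmu μ f) :
    ∃ fhat : Ω →ₘ[μ] ℝ, (∀ p : ℝ≥0∞, 1 ≤ p → eLpNorm fhat p μ ≤ eLpNorm f p μ) ∧
      AuTendsto μ atTop (fun n => cesaro μ T n f) fhat := by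
  obtain ⟨fhat, hau, hlim⟩ := (hT.auCauchy_cesaro hf).exists_auTendsto
  refine ⟨fhat, fun p hp => ?_, hau⟩
  calc eLpNorm fhat p μ ≤ liminf (fun n => eLpNorm (cesaro μ T n f) p μ) atTop :=
        Lp.eLpNorm_lim_le_liminf_eLpNorm (fun n => (cesaro μ T n f).aestronglyMeasurable) fhat hlim
    _ ≤ eLpNorm f p μ := liminf_le_of_frequently_le' <|
        Frequently.of_forall fun n => (hT.cesaro n).eLpNorm_map_le hp f

/-- **Commutative case of Theorem 4.3**: for a positive Dunford–Schwartz operator `T`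
on a σ-finite measure space and `f ∈ L^p(μ)`, `1 ≤ p < ∞`, the Cesàro averages
`A_n(f) = (1/n) ∑_{k=0}^{n-1} T^k f` converge almost uniformly to some `f̂ ∈ L^p(μ)`. -/
theorem cesaro_auTendsto_of_memLp (μ : Measure Ω) [SigmaFinite μ]
    (T : (Ω →ₘ[μ] ℝ) → (Ω →ₘ[μ] ℝ)) (hT : IsPosDS μ T)
    (p : ℝ≥0∞) (hp1 : 1 ≤ p) (hp2 : p ≠ ∞)
    (f : Ω →ₘ[μ] ℝ) (hf : eLpNorm f p μ ≠ ∞) :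
    ∃ fhat : Ω →ₘ[μ] ℝ, eLpNorm fhat p μ ≠ ∞ ∧
      AuTendsto μ atTop (fun n => cesaro μ T n f) fhat := by
  obtain ⟨fhat, hnorm, hlim⟩ :=
    cesaro_auTendsto_of_memLp_general μ T hT f (memRmu_of_eLpNorm_ne_top hp1 hp2 hf)
  exact ⟨fhat, ne_top_of_le_ne_top hf (hnorm p hp1), hlim⟩
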